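/- Let X be an infinite separable locally compact metric space and let f : X → X be a continuous map. Then f is weakly mixing if and only if for all nonempty open sets U, V ⊆ X the set N(U, V) contains arbitrarily long strings of consecutive positive integers, i.e., for every L ≥ 1 there exists m ≥ 1 such that m, m+1, …, m+L−1 all belong to N(U, V). -/

import Mathlib

/-- `NSet f U V` is the set `N(U,V) = {n ≥ 1 : fⁿ(U) ∩ V ≠ ∅}`. -/
def NSet {X : Type*} (f : X → X) (U V : Set X) : Set ℕ :=
  {n : ℕ | 1 ≤ n ∧ (f^[n] '' U ∩ V).Nonempty}

/-- `f` is (topologically) weakly mixing. -/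
def WeaklyMixing {X : Type*} [TopologicalSpace X] (f : X → X) : Prop :=
  ∀ U₁ U₂ V₁ V₂ : Set X, IsOpen U₁ → IsOpen U₂ → IsOpen V₁ → IsOpen V₂ →
    U₁.Nonempty → U₂.Nonempty → V₁.Nonempty → V₂.Nonempty →
    ∃ n : ℕ, 1 ≤ n ∧ (f^[n] '' U₁ ∩ V₁).Nonempty ∧ (f^[n] '' U₂ ∩ V₂).Nonempty

/-!
Both directions rest on one observation: intersecting `U₁` with `f⁻ᵃ(U₂)` and `V₁` with `f⁻ᵇ(V₂)`
yields open sets whose return times `k` lie in `N(U₁, V₁)`, while `k + b - a`, if positive, lies in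
`N(U₂, V₂)`.

If `f` is weakly mixing, then `a = b` can be chosen with both intersections nonempty, so finitely
many sets of return times always contain another one (Furstenberg's intersection lemma). A common
element `n` of `N(U, f⁻ⁱ(V))` for `i < L` starts the string `n, …, n + L - 1` in `N(U, V)`.

Conversely, choose `a ∈ N(U₁, U₂)` and `b ∈ N(V₁, V₂)`. A long string of return times for the two
intersections contains `c + a` and `c + b` for some `c`, and then `c + b` belongs to both
`N(U₁, V₁)` and `N(U₂, V₂)`.
-/

/-- A set of natural numbers is thick if it contains arbitrarily long strings of consecutive
positive integers; `L` is the length of the string and `m` its first term. -/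
def IsThick (S : Set ℕ) : Prop :=
  ∀ L : ℕ, 1 ≤ L → ∃ m : ℕ, 1 ≤ m ∧ ∀ i < L, m + i ∈ S

namespace IsThick

variable {S : Set ℕ}

theorem nonempty (hS : IsThick S) : S.Nonempty :=
  let ⟨m, _, hm⟩ := hS 1 le_rfl
  ⟨m + 0, hm 0 one_pos⟩

theorem exists_add_mem_and_add_mem (hS : IsThick S) (a b : ℕ) : ∃ c, c + a ∈ S ∧ c + b ∈ S :=
  let ⟨c, _, hc⟩ := hS (a + b + 1) (by lia)
  ⟨c, hc a (by lia), hc b (by lia)⟩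

end IsThick

section ReturnTimes

variable {X : Type*} {f : X → X} {U V U' V' : Set X} {n k a b : ℕ}

theorem mem_NSet_iff : n ∈ NSet f U V ↔ 1 ≤ n ∧ (U ∩ f^[n] ⁻¹' V).Nonempty :=
  and_congr_right fun _ => Set.image_inter_nonempty_iff

theorem NSet_mono (hU : U ⊆ U') (hV : V ⊆ V') : NSet f U V ⊆ NSet f U' V' :=
  fun _ ⟨hn, hUV⟩ => ⟨hn, hUV.mono (Set.inter_subset_inter (Set.image_mono hU) hV)⟩

theorem mem_NSet_of_mem_NSet_preimage (hk : k ∈ NSet f (f^[a] ⁻¹' U) (f^[b] ⁻¹' V))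
    (hn : 1 ≤ n) (h : n + a = b + k) : n ∈ NSet f U V := by
  obtain ⟨-, x, hxU, hxV⟩ := mem_NSet_iff.1 hk
  refine mem_NSet_iff.2 ⟨hn, f^[a] x, hxU, ?_⟩
  rwa [Set.mem_preimage, ← Function.iterate_add_apply, h, Function.iterate_add_apply]

end ReturnTimes

section Topology

variable {X : Type*} [TopologicalSpace X] {f : X → X}

namespace WeaklyMixing

theorem NSet_nonempty (h : WeaklyMixing f) {U V : Set X} (hU : IsOpen U) (hV : IsOpen V)
    (hUne : U.Nonempty) (hVne : V.Nonempty) : (NSet f U V).Nonempty :=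
  let ⟨n, hn, hUV, _⟩ := h U U V V hU hU hV hV hUne hUne hVne hVne
  ⟨n, hn, hUV⟩

theorem denseRange (h : WeaklyMixing f) : DenseRange f := by
  refine dense_iff_inter_open.2 fun V hV hVne => ?_
  obtain ⟨n, hn, y, ⟨x, -, rfl⟩, hxV⟩ := h.NSet_nonempty hV hV hVne hVne
  obtain ⟨m, rfl⟩ := Nat.exists_eq_add_of_le' hn
  exact ⟨_, hxV, f^[m] x, (Function.iterate_succ_apply' f m x).symm⟩

theorem denseRange_iterate (h : WeaklyMixing f) (hf : Continuous f) (n : ℕ) :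
    DenseRange f^[n] := by
  induction n with
  | zero => exact denseRange_id
  | succ n ih => exact ih.comp h.denseRange (hf.iterate n)

theorem exists_NSet_subset_inter (h : WeaklyMixing f) (hf : Continuous f) {U₁ U₂ V₁ V₂ : Set X}
    (hU₁ : IsOpen U₁) (hU₂ : IsOpen U₂) (hV₁ : IsOpen V₁) (hV₂ : IsOpen V₂)
    (hU₁ne : U₁.Nonempty) (hU₂ne : U₂.Nonempty) (hV₁ne : V₁.Nonempty) (hV₂ne : V₂.Nonempty) :
    ∃ U V : Set X, IsOpen U ∧ IsOpen V ∧ U.Nonempty ∧ V.Nonempty ∧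
      NSet f U V ⊆ NSet f U₁ V₁ ∩ NSet f U₂ V₂ := by
  obtain ⟨n, -, hU, hV⟩ := h U₁ V₁ U₂ V₂ hU₁ hV₁ hU₂ hV₂ hU₁ne hV₁ne hU₂ne hV₂ne
  refine ⟨U₁ ∩ f^[n] ⁻¹' U₂, V₁ ∩ f^[n] ⁻¹' V₂, hU₁.inter (hU₂.preimage (hf.iterate n)),
    hV₁.inter (hV₂.preimage (hf.iterate n)), Set.image_inter_nonempty_iff.1 hU,
    Set.image_inter_nonempty_iff.1 hV, Set.subset_inter ?_ fun k hk => ?_⟩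
  · exact NSet_mono Set.inter_subset_left Set.inter_subset_left
  · exact mem_NSet_of_mem_NSet_preimage (NSet_mono Set.inter_subset_right Set.inter_subset_right hk)
      hk.1 (add_comm k n)

theorem exists_NSet_subset_biInter [Nonempty X] (h : WeaklyMixing f) (hf : Continuous f)
    {ι : Type*} (s : Finset ι) {U V : ι → Set X} (hU : ∀ i, IsOpen (U i)) (hV : ∀ i, IsOpen (V i))
    (hUne : ∀ i, (U i).Nonempty) (hVne : ∀ i, (V i).Nonempty) :
    ∃ A B : Set X, IsOpen A ∧ IsOpen B ∧ A.Nonempty ∧ B.Nonempty ∧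
      NSet f A B ⊆ ⋂ i ∈ s, NSet f (U i) (V i) := by
  classical
  induction s using Finset.induction_on with
  | empty =>
    exact ⟨Set.univ, Set.univ, isOpen_univ, isOpen_univ, Set.univ_nonempty, Set.univ_nonempty,
      by simp⟩
  | insert i s _ ih =>
    obtain ⟨A, B, hA, hB, hAne, hBne, hAB⟩ := ih
    obtain ⟨C, D, hC, hD, hCne, hDne, hCD⟩ :=
      h.exists_NSet_subset_inter hf (hU i) hA (hV i) hB (hUne i) hAne (hVne i) hBne
    refine ⟨C, D, hC, hD, hCne, hDne, hCD.trans ?_⟩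
    rw [Finset.set_biInter_insert]
    exact Set.inter_subset_inter_right _ hAB

theorem isThick_NSet (h : WeaklyMixing f) (hf : Continuous f) {U V : Set X} (hU : IsOpen U)
    (hV : IsOpen V) (hUne : U.Nonempty) (hVne : V.Nonempty) : IsThick (NSet f U V) := by
  intro L _
  have : Nonempty X := hUne.to_type
  obtain ⟨A, B, hA, hB, hAne, hBne, hAB⟩ := h.exists_NSet_subset_biInter hf (Finset.range L)
    (fun _ => hU) (fun i => hV.preimage (hf.iterate i)) (fun _ => hUne)
    fun i => (h.denseRange_iterate hf i).exists_mem_open hV hVne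
  obtain ⟨n, hn⟩ := h.NSet_nonempty hA hB hAne hBne
  refine ⟨n, hn.1, fun i hi => ?_⟩
  have hni : n ∈ NSet f U (f^[i] ⁻¹' V) := Set.mem_iInter₂.1 (hAB hn) i (Finset.mem_range.2 hi)
  exact mem_NSet_of_mem_NSet_preimage (a := 0) hni (hn.1.trans le_self_add) (add_comm n i)

end WeaklyMixing

theorem weaklyMixing_of_isThick_NSet (hf : Continuous f)
    (h : ∀ U V : Set X, IsOpen U → IsOpen V → U.Nonempty → V.Nonempty → IsThick (NSet f U V)) :
    WeaklyMixing f := by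
  intro U₁ U₂ V₁ V₂ hU₁ hU₂ hV₁ hV₂ hU₁ne hU₂ne hV₁ne hV₂ne
  obtain ⟨a, ha⟩ := (h U₁ U₂ hU₁ hU₂ hU₁ne hU₂ne).nonempty
  obtain ⟨b, hb⟩ := (h V₁ V₂ hV₁ hV₂ hV₁ne hV₂ne).nonempty
  obtain ⟨c, hca, hcb⟩ := (h (U₁ ∩ f^[a] ⁻¹' U₂) (V₁ ∩ f^[b] ⁻¹' V₂)
    (hU₁.inter (hU₂.preimage (hf.iterate a))) (hV₁.inter (hV₂.preimage (hf.iterate b)))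
    (mem_NSet_iff.1 ha).2 (mem_NSet_iff.1 hb).2).exists_add_mem_and_add_mem a b
  have hcb₁ : c + b ∈ NSet f U₁ V₁ := NSet_mono Set.inter_subset_left Set.inter_subset_left hcb
  have hcb₂ : c + b ∈ NSet f U₂ V₂ := mem_NSet_of_mem_NSet_preimage
    (NSet_mono Set.inter_subset_right Set.inter_subset_right hca) hcb.1 (by lia)
  exact ⟨c + b, hcb.1, hcb₁.2, hcb₂.2⟩

end Topology

theorem weaklyMixing_iff_arbitrarily_long_strings_general {X : Type*} [TopologicalSpace X]
    (f : X → X) (hf : Continuous f) :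
    WeaklyMixing f ↔
      ∀ U V : Set X, IsOpen U → IsOpen V → U.Nonempty → V.Nonempty →
        ∀ L : ℕ, 1 ≤ L → ∃ m : ℕ, 1 ≤ m ∧ ∀ i < L, (m + i) ∈ NSet f U V :=
  ⟨fun h _ _ hU hV hUne hVne => h.isThick_NSet hf hU hV hUne hVne, weaklyMixing_of_isThick_NSet hf⟩

theorem weaklyMixing_iff_arbitrarily_long_strings {X : Type*} [MetricSpace X] [Infinite X]
    [TopologicalSpace.SeparableSpace X] [LocallyCompactSpace X]
    (f : X → X) (hf : Continuous f) :
    WeaklyMixing f ↔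
      ∀ U V : Set X, IsOpen U → IsOpen V → U.Nonempty → V.Nonempty →
        ∀ L : ℕ, 1 ≤ L → ∃ m : ℕ, 1 ≤ m ∧ ∀ i < L, (m + i) ∈ NSet f U V :=
  weaklyMixing_iff_arbitrarily_long_strings_general f hf
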